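/- arXiv:2305.06082 — 2 statements merged into one kernel-verified Lean document; each statement's English description precedes it below -/
import Mathlib

section
/- Let M ≥ 1 and K ≥ 2 be integers, let q₀ be a box-probability matrix with q₀_{m,k} > 0 for all m, k, and let μ₀ ∈ ℝ^K have a unique maximiser a*(μ₀). Then the set-valued map (q, μ) ↦ W*(q, μ) is upper-hemicontinuous at (q₀, μ₀): for every ε > 0 there exists δ > 0 such that for every box-probability matrix q and every μ ∈ ℝ^K with max_{m,k} |q_{m,k} − q₀_{m,k}| < δ and max_k |μ_k − μ₀_k| < δ, every w ∈ W*(q, μ) satisfies d∞(w, W*(q₀, μ₀)) ≤ ε. -/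
/-!
When `μ` has the unique maximiser `a` and every arm has positive mass `P_k = ∑_m w_m q_{m,k}`, the
infimum defining `psi` has the closed form
`min_{k ≠ a} (P_a P_k / (P_a + P_k)) (μ_a - μ_k)² / 2` (`psi_eq_rate`): to violate optimality through
`k` it is cheapest to move only the coordinates `a` and `k` to their common `P`-weighted mean. The
right-hand side is jointly continuous in `(q, μ, w)` at every point with `q > 0` and `w` in the
simplex (`continuousAt_rate`).

Upper hemicontinuity then follows as in Berge's maximum theorem. Fix an optimal `w₀` for
`(q₀, μ₀)` and let `C` be the compact set of allocations at distance at least `ε` from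
`W*(q₀, μ₀)`. Every `w ∈ C` is strictly worse than `w₀` at `(q₀, μ₀)`, hence, by continuity and the
tube lemma, every `w ∈ C` is strictly worse than `w₀` at all nearby `(q, μ)`, so no element of `C`
is optimal there.
-/

/-- The probability simplex `Σ_M` on the boxes. -/
def simplex (M : ℕ) : Set (Fin M → ℝ) :=
  {w | (∀ m, 0 ≤ w m) ∧ ∑ m, w m = 1}

/-- `ψ(q, μ, w)`: when `μ` has a unique maximiser `a*`, this is the infimum over
alternative instances `λ ∈ Alt(μ) = {λ : ∃ k ≠ a*, λ_k > λ_{a*}}` of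
`∑_m ∑_k w_m q_{m,k} (μ_k − λ_k)² / 2`; set to `0` when the maximiser is not unique. -/
noncomputable def psi {M K : ℕ} (q : Fin M → Fin K → ℝ) (μ : Fin K → ℝ)
    (w : Fin M → ℝ) : ℝ :=
  if h : ∃ a : Fin K, ∀ k, k ≠ a → μ k < μ a then
    sInf {v : ℝ | ∃ lam : Fin K → ℝ, (∃ k, k ≠ h.choose ∧ lam h.choose < lam k) ∧
      v = ∑ m, ∑ k, w m * q m k * ((μ k - lam k) ^ 2 / 2)}
  else 0

/-- `T*(q, μ) = sup_{w ∈ Σ_M} ψ(q, μ, w)`. -/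
noncomputable def Tstar {M K : ℕ} (q : Fin M → Fin K → ℝ) (μ : Fin K → ℝ) : ℝ :=
  sSup {v : ℝ | ∃ w ∈ simplex M, v = psi q μ w}

/-- The set of optimal allocations `W*(q, μ)`. -/
noncomputable def Wstar {M K : ℕ} (q : Fin M → Fin K → ℝ) (μ : Fin K → ℝ) :
    Set (Fin M → ℝ) :=
  {w ∈ simplex M | psi q μ w = Tstar q μ}

/-- The sup-distance `d∞(u, C) = inf_{v ∈ C} max_m |u_m − v_m|`. -/
noncomputable def dinfSet {M : ℕ} (u : Fin M → ℝ) (C : Set (Fin M → ℝ)) : ℝ :=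
  sInf ((fun v => ⨆ m, |u m - v m|) '' C)

open Filter Topology

/-- The mass `∑_m w_m q_{m,k}` given to arm `k` by the allocation `w`. -/
def armMass {M K : ℕ} (q : Fin M → Fin K → ℝ) (w : Fin M → ℝ) (k : Fin K) : ℝ :=
  ∑ m, w m * q m k

/-- The cost of making arm `k` at least as good as arm `a`. -/
noncomputable def pairRate {M K : ℕ} (a : Fin K) (q : Fin M → Fin K → ℝ) (μ : Fin K → ℝ)
    (w : Fin M → ℝ) (k : Fin K) : ℝ :=
  armMass q w a * armMass q w k / (armMass q w a + armMass q w k) * (μ a - μ k) ^ 2 / 2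

/-- The closed form of `psi` when `a` is the unique maximiser of `μ`; `hne` says that `a`
has a competitor, so that the minimum is not over an empty set. -/
noncomputable def rate {M K : ℕ} (a : Fin K) (hne : (Finset.univ.erase a).Nonempty)
    (q : Fin M → Fin K → ℝ) (μ : Fin K → ℝ) (w : Fin M → ℝ) : ℝ :=
  (Finset.univ.erase a).inf' hne (pairRate a q μ w)

lemma armMass_pos {M K : ℕ} {q : Fin M → Fin K → ℝ} {w : Fin M → ℝ}
    (hq : ∀ m k, 0 < q m k) (hw : w ∈ simplex M) (k : Fin K) : 0 < armMass q w k := by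
  obtain ⟨hw0, hw1⟩ := hw
  obtain ⟨m, -, hm⟩ : ∃ m ∈ Finset.univ, 0 < w m := by
    apply Finset.exists_lt_of_sum_lt
    simp [hw1]
  exact Finset.sum_pos' (fun i _ => mul_nonneg (hw0 i) (hq i k).le)
    ⟨m, Finset.mem_univ m, mul_pos hm (hq m k)⟩

lemma cost_eq {M K : ℕ} (q : Fin M → Fin K → ℝ) (w : Fin M → ℝ) (f : Fin K → ℝ) :
    ∑ m, ∑ k, w m * q m k * f k = ∑ k, armMass q w k * f k := by
  rw [Finset.sum_comm]
  simp only [armMass, Finset.sum_mul]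

/-- Cauchy–Schwarz lower bound for the cost of two displacements `x`, `y` that together close a gap
`d`; equality holds when `x + y = d` and `A x = B y`. -/
lemma pair_cost_le {A B x y d : ℝ} (hA : 0 < A) (hB : 0 < B) (hd : 0 ≤ d) (hxy : d ≤ x + y) :
    A * B / (A + B) * d ^ 2 / 2 ≤ A * (x ^ 2 / 2) + B * (y ^ 2 / 2) := by
  have h1 : A * B / (A + B) * d ^ 2 ≤ A * B / (A + B) * (x + y) ^ 2 := by
    gcongr
  have h2 : A * B / (A + B) * (x + y) ^ 2 ≤ A * x ^ 2 + B * y ^ 2 := by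
    rw [div_mul_eq_mul_div, div_le_iff₀ (by positivity)]
    nlinarith [sq_nonneg (A * x - B * y)]
  linarith

lemma psi_eq_rate {M K : ℕ} (a : Fin K) (hne : (Finset.univ.erase a).Nonempty)
    {q : Fin M → Fin K → ℝ} {μ : Fin K → ℝ} {w : Fin M → ℝ}
    (hμ : ∀ k, k ≠ a → μ k < μ a) (hP : ∀ k, 0 < armMass q w k) :
    psi q μ w = rate a hne q μ w := by
  have h : ∃ a : Fin K, ∀ k, k ≠ a → μ k < μ a := ⟨a, hμ⟩
  have hc : h.choose = a := by
    by_contra hca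
    exact lt_asymm (hμ _ hca) (h.choose_spec a (Ne.symm hca))
  rw [psi, dif_pos h, hc]
  have hlow : ∀ v ∈ {v : ℝ | ∃ lam : Fin K → ℝ, (∃ k, k ≠ a ∧ lam a < lam k) ∧
      v = ∑ m, ∑ k, w m * q m k * ((μ k - lam k) ^ 2 / 2)}, rate a hne q μ w ≤ v := by
    rintro v ⟨lam, ⟨k, hka, hlam⟩, rfl⟩
    rw [cost_eq q w fun k => (μ k - lam k) ^ 2 / 2]
    calc rate a hne q μ w ≤ pairRate a q μ w k :=
          Finset.inf'_le _ (Finset.mem_erase.2 ⟨hka, Finset.mem_univ k⟩)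
      _ ≤ armMass q w a * ((μ a - lam a) ^ 2 / 2) + armMass q w k * ((lam k - μ k) ^ 2 / 2) :=
          pair_cost_le (hP a) (hP k) (sub_nonneg.2 (hμ k hka).le) (by linarith)
      _ = ∑ j ∈ {a, k}, armMass q w j * ((μ j - lam j) ^ 2 / 2) := by
          rw [Finset.sum_pair (Ne.symm hka)]
          ring
      _ ≤ _ := Finset.sum_le_sum_of_subset_of_nonneg (Finset.subset_univ _)
          fun j _ _ => mul_nonneg (hP j).le (by positivity)
  apply le_antisymm
  · refine Finset.le_inf' hne _ fun k hk => ?_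
    have hka : k ≠ a := (Finset.mem_erase.1 hk).1
    set A := armMass q w a with hA
    set B := armMass q w k with hB
    have hApos : 0 < A := hP a
    have hBpos : 0 < B := hP k
    set d := μ a - μ k with hd
    -- Both arms move to their weighted mean; the extra `t > 0` makes the alternative strict.
    have hval : ∀ t : ℝ, 0 < t →
        sInf {v : ℝ | ∃ lam : Fin K → ℝ, (∃ k, k ≠ a ∧ lam a < lam k) ∧
          v = ∑ m, ∑ k, w m * q m k * ((μ k - lam k) ^ 2 / 2)} ≤
        A * ((B * d / (A + B)) ^ 2 / 2) + B * ((A * d / (A + B) + t) ^ 2 / 2) := by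
      intro t ht
      refine csInf_le ⟨_, hlow⟩ ⟨fun j => if j = a then μ a - B * d / (A + B) else
        if j = k then μ k + (A * d / (A + B) + t) else μ j, ⟨k, hka, ?_⟩, ?_⟩
      · simp only [if_true, if_neg hka]
        have : A * d / (A + B) + B * d / (A + B) = d := by field_simp
        linarith
      · rw [cost_eq q w fun j => (μ j - (if j = a then μ a - B * d / (A + B) else
          if j = k then μ k + (A * d / (A + B) + t) else μ j)) ^ 2 / 2,
          Fintype.sum_eq_add a k (Ne.symm hka)]
        · simp only [if_true, if_neg hka, ← hA, ← hB]
          ring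
        · rintro j ⟨h1, h2⟩
          simp [h1, h2]
    have hlim : Tendsto (fun t : ℝ =>
        A * ((B * d / (A + B)) ^ 2 / 2) + B * ((A * d / (A + B) + t) ^ 2 / 2)) (𝓝[>] 0)
        (𝓝 (A * ((B * d / (A + B)) ^ 2 / 2) + B * ((A * d / (A + B) + 0) ^ 2 / 2))) := by
      apply Tendsto.mono_left _ nhdsWithin_le_nhds
      apply Continuous.tendsto (by fun_prop)
    have hfin := ge_of_tendsto hlim (eventually_mem_nhdsWithin.mono fun t ht => hval t ht)
    refine hfin.trans (le_of_eq ?_)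
    rw [pairRate, ← hA, ← hB, ← hd]
    field_simp
    ring
  · obtain ⟨k, hk⟩ := hne
    have hka : k ≠ a := (Finset.mem_erase.1 hk).1
    refine le_csInf ⟨_, fun j => if j = k then 1 else 0, ⟨k, hka, ?_⟩, rfl⟩ hlow
    simp [Ne.symm hka]

lemma continuousAt_rate {M K : ℕ} (a : Fin K) (hne : (Finset.univ.erase a).Nonempty)
    {q : Fin M → Fin K → ℝ} {μ : Fin K → ℝ} {w : Fin M → ℝ} (hP : ∀ k, 0 < armMass q w k) :
    ContinuousAt (fun z : ((Fin M → Fin K → ℝ) × (Fin K → ℝ)) × (Fin M → ℝ) =>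
      rate a hne z.1.1 z.1.2 z.2) ((q, μ), w) := by
  have hmass : ∀ k, Continuous (fun z : ((Fin M → Fin K → ℝ) × (Fin K → ℝ)) × (Fin M → ℝ) =>
      armMass z.1.1 z.2 k) := fun k => by
    unfold armMass
    fun_prop
  refine ContinuousAt.finset_inf'_apply hne fun k _ => ?_
  unfold pairRate
  refine ContinuousAt.div_const (ContinuousAt.mul (ContinuousAt.div ?_ ?_ ?_) ?_) 2
  · exact ((hmass a).mul (hmass k)).continuousAt
  · exact ((hmass a).add (hmass k)).continuousAt
  · exact (add_pos (hP a) (hP k)).ne'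
  · exact Continuous.continuousAt (by fun_prop)

lemma isCompact_simplex (M : ℕ) : IsCompact (simplex M) :=
  isCompact_stdSimplex ℝ (Fin M)

lemma continuousOn_psi {M K : ℕ} (a : Fin K) (hne : (Finset.univ.erase a).Nonempty)
    {q : Fin M → Fin K → ℝ} {μ : Fin K → ℝ}
    (hq : ∀ m k, 0 < q m k) (hμ : ∀ k, k ≠ a → μ k < μ a) :
    ContinuousOn (psi q μ) (simplex M) := by
  have h : ContinuousOn (rate a hne q μ) (simplex M) := fun w hw =>
    ((continuousAt_rate a hne (μ := μ) (armMass_pos hq hw)).comp (f := fun w => ((q, μ), w))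
      (Continuous.continuousAt (by fun_prop))).continuousWithinAt
  exact h.congr fun w hw => psi_eq_rate a hne hμ (armMass_pos hq hw)

lemma psi_le_Tstar {M K : ℕ} (a : Fin K) (hne : (Finset.univ.erase a).Nonempty)
    {q : Fin M → Fin K → ℝ} {μ : Fin K → ℝ}
    (hq : ∀ m k, 0 < q m k) (hμ : ∀ k, k ≠ a → μ k < μ a) {w : Fin M → ℝ} (hw : w ∈ simplex M) :
    psi q μ w ≤ Tstar q μ := by
  obtain ⟨b, hb⟩ := (isCompact_simplex M).bddAbove_image (continuousOn_psi a hne hq hμ)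
  refine le_csSup ⟨b, ?_⟩ ⟨w, hw, rfl⟩
  rintro v ⟨u, hu, rfl⟩
  exact hb ⟨u, hu, rfl⟩

lemma Wstar_nonempty {M K : ℕ} (hM : 1 ≤ M) (a : Fin K) (hne : (Finset.univ.erase a).Nonempty)
    {q : Fin M → Fin K → ℝ} {μ : Fin K → ℝ}
    (hq : ∀ m k, 0 < q m k) (hμ : ∀ k, k ≠ a → μ k < μ a) : (Wstar q μ).Nonempty := by
  have hS : (simplex M).Nonempty := ⟨_, single_mem_stdSimplex ℝ (⟨0, hM⟩ : Fin M)⟩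
  obtain ⟨w, hw, hmax⟩ := (isCompact_simplex M).exists_isMaxOn hS (continuousOn_psi a hne hq hμ)
  refine ⟨w, hw, le_antisymm (psi_le_Tstar a hne hq hμ hw) (csSup_le ⟨_, w, hw, rfl⟩ ?_)⟩
  rintro v ⟨u, hu, rfl⟩
  exact hmax hu

lemma dinfSet_le_of_dist_le {M : ℕ} {u v : Fin M → ℝ} {C : Set (Fin M → ℝ)} {ε : ℝ}
    (hε : 0 ≤ ε) (hv : v ∈ C) (h : dist u v ≤ ε) : dinfSet u C ≤ ε := by
  have hbdd : BddBelow ((fun v => ⨆ m, |u m - v m|) '' C) := by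
    refine ⟨0, ?_⟩
    rintro _ ⟨x, -, rfl⟩
    exact Real.iSup_nonneg fun m => abs_nonneg _
  refine (csInf_le hbdd (Set.mem_image_of_mem _ hv)).trans (Real.iSup_le (fun m => ?_) hε)
  rw [← Real.dist_eq]
  exact (dist_le_pi_dist u v m).trans h

/-- the set-valued map `(q, μ) ↦ W*(q, μ)` is upper-hemicontinuous at
`(q₀, μ₀)` when `q₀` has strictly positive entries and `μ₀` has a unique maximiser. -/
theorem stmt4 (M K : ℕ) (hM : 1 ≤ M) (hK : 2 ≤ K)
    (q₀ : Fin M → Fin K → ℝ) (hq₀pos : ∀ m k, 0 < q₀ m k) (hq₀sum : ∀ m, ∑ k, q₀ m k = 1)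
    (μ₀ : Fin K → ℝ) (astar : Fin K) (hstar : ∀ k, k ≠ astar → μ₀ k < μ₀ astar)
    (ε : ℝ) (hε : 0 < ε) :
    ∃ δ > (0 : ℝ), ∀ q : Fin M → Fin K → ℝ,
      (∀ m k, 0 ≤ q m k) → (∀ m, ∑ k, q m k = 1) →
      ∀ μ : Fin K → ℝ,
        (∀ m k, |q m k - q₀ m k| < δ) → (∀ k, |μ k - μ₀ k| < δ) →
        ∀ w ∈ Wstar q μ, dinfSet w (Wstar q₀ μ₀) ≤ ε := by
  have hne : (Finset.univ.erase astar).Nonempty := by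
    rw [← Finset.card_pos, Finset.card_erase_of_mem (Finset.mem_univ _)]
    simp
    omega
  obtain ⟨w₀, hw₀⟩ := Wstar_nonempty hM astar hne hq₀pos hstar
  set C : Set (Fin M → ℝ) := simplex M ∩ ⋂ v ∈ Wstar q₀ μ₀, {w | ε ≤ dist w v} with hC
  have hCcomp : IsCompact C := (isCompact_simplex M).inter_right <|
    isClosed_biInter fun v _ => isClosed_le continuous_const (by fun_prop)
  have hworse : ∀ᶠ x : (Fin M → Fin K → ℝ) × (Fin K → ℝ) in 𝓝 (q₀, μ₀), ∀ w ∈ C,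
      rate astar hne x.1 x.2 w < rate astar hne x.1 x.2 w₀ := by
    refine hCcomp.eventually_forall_of_forall_eventually fun w hw => ?_
    have hlt : rate astar hne q₀ μ₀ w < rate astar hne q₀ μ₀ w₀ := by
      rw [← psi_eq_rate astar hne hstar (armMass_pos hq₀pos hw.1),
        ← psi_eq_rate astar hne hstar (armMass_pos hq₀pos hw₀.1), hw₀.2]
      refine lt_of_le_of_ne (psi_le_Tstar astar hne hq₀pos hstar hw.1) fun heq => ?_
      have : ε ≤ dist w w := Set.mem_iInter₂.1 hw.2 w ⟨hw.1, heq⟩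
      rw [dist_self] at this
      linarith
    have h1 := continuousAt_rate astar hne (μ := μ₀) (armMass_pos hq₀pos hw.1)
    have h2 : ContinuousAt (fun z : ((Fin M → Fin K → ℝ) × (Fin K → ℝ)) × (Fin M → ℝ) =>
        rate astar hne z.1.1 z.1.2 w₀) ((q₀, μ₀), w) :=
      (continuousAt_rate astar hne (μ := μ₀) (armMass_pos hq₀pos hw₀.1)).comp
        (f := fun z : ((Fin M → Fin K → ℝ) × (Fin K → ℝ)) × (Fin M → ℝ) => (z.1, w₀))
        (x := ((q₀, μ₀), w)) (Continuous.continuousAt (by fun_prop))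
    exact h1.eventually_lt h2 hlt
  have hqpos : ∀ᶠ x : (Fin M → Fin K → ℝ) × (Fin K → ℝ) in 𝓝 (q₀, μ₀), ∀ m k, 0 < x.1 m k :=
    eventually_all.2 fun m => eventually_all.2 fun k =>
      continuousAt_const.eventually_lt (Continuous.continuousAt (by fun_prop)) (hq₀pos m k)
  have hμmax : ∀ᶠ x : (Fin M → Fin K → ℝ) × (Fin K → ℝ) in 𝓝 (q₀, μ₀),
      ∀ k, k ≠ astar → x.2 k < x.2 astar :=
    eventually_all.2 fun k => eventually_imp_distrib_left.2 fun hk =>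
      ContinuousAt.eventually_lt (f := fun x : (Fin M → Fin K → ℝ) × (Fin K → ℝ) => x.2 k)
        (g := fun x => x.2 astar) (Continuous.continuousAt (by fun_prop))
        (Continuous.continuousAt (by fun_prop)) (hstar k hk)
  obtain ⟨δ, hδ, hball⟩ := Metric.eventually_nhds_iff.1 (hworse.and (hqpos.and hμmax))
  refine ⟨δ, hδ, fun q _ _ μ hq hμ w hw => ?_⟩
  have hdist : dist (q, μ) (q₀, μ₀) < δ := by
    rw [Prod.dist_eq, max_lt_iff]
    exact ⟨(dist_pi_lt_iff hδ).2 fun m => (dist_pi_lt_iff hδ).2 fun k => hq m k,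
      (dist_pi_lt_iff hδ).2 fun k => hμ k⟩
  obtain ⟨hlt, hqp, hμm⟩ := hball hdist
  have hwC : w ∉ C := fun hwC => by
    have h := hlt w hwC
    simp only at h hqp hμm
    rw [← psi_eq_rate astar hne hμm (armMass_pos hqp hw.1),
      ← psi_eq_rate astar hne hμm (armMass_pos hqp hw₀.1), hw.2] at h
    exact absurd (psi_le_Tstar astar hne hqp hμm hw₀.1) (not_le.2 h)
  obtain ⟨v, hv, hvd⟩ : ∃ v ∈ Wstar q₀ μ₀, dist w v < ε := by
    by_contra! hcon
    exact hwC ⟨hw.1, Set.mem_iInter₂.2 hcon⟩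
  exact dinfSet_le_of_dist_le hε.le hv hvd.le
end

section
/- Let M ≥ 1 and K ≥ 2 be integers, let q₀ be a box-probability matrix with q₀_{m,k} > 0 for all m, k, let μ₀ ∈ ℝ^K have a unique maximiser a*(μ₀), and let w₀ ∈ Σ_M. Then ψ is jointly continuous at (q₀, μ₀, w₀): for every sequence (qⁿ, μⁿ, wⁿ) with each qⁿ a box-probability matrix, μⁿ ∈ ℝ^K, wⁿ ∈ Σ_M, and (qⁿ, μⁿ, wⁿ) → (q₀, μ₀, w₀), one has ψ(qⁿ, μⁿ, wⁿ) → ψ(q₀, μ₀, w₀). -/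
open Filter Topology

/-- The effective weight of arm `k` under the allocation `w`. -/
def armWeight {M K : ℕ} (q : Fin M → Fin K → ℝ) (w : Fin M → ℝ) (k : Fin K) : ℝ :=
  ∑ m, w m * q m k

/-- The transportation cost: the infimal price of making arm `k` overtake arm `a`. -/
noncomputable def pairCost {K : ℕ} (c μ : Fin K → ℝ) (a k : Fin K) : ℝ :=
  c a * c k / (c a + c k) * ((μ a - μ k) ^ 2 / 2)

lemma objective_eq {M K : ℕ} (q : Fin M → Fin K → ℝ) (μ lam : Fin K → ℝ) (w : Fin M → ℝ) :
    ∑ m, ∑ k, w m * q m k * ((μ k - lam k) ^ 2 / 2)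
      = ∑ k, armWeight q w k * ((μ k - lam k) ^ 2 / 2) := by
  rw [Finset.sum_comm]
  simp only [armWeight, Finset.sum_mul]

/-- Keeping only the coordinates `a` and `k` of the objective, the bound is the inequality
`x * y / (x + y) * (u + v)² ≤ x * u² + y * v²`. -/
lemma pairCost_le {K : ℕ} (c μ lam : Fin K → ℝ) (hc : ∀ k, 0 < c k) (a k : Fin K)
    (hka : k ≠ a) (hμ : μ k < μ a) (hlam : lam a < lam k) :
    pairCost c μ a k ≤ ∑ j, c j * ((μ j - lam j) ^ 2 / 2) := by
  have h1 : c a * ((μ a - lam a) ^ 2 / 2) + c k * ((μ k - lam k) ^ 2 / 2)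
      ≤ ∑ j, c j * ((μ j - lam j) ^ 2 / 2) := by
    rw [← Finset.sum_pair (f := fun j => c j * ((μ j - lam j) ^ 2 / 2)) hka.symm]
    refine Finset.sum_le_sum_of_subset_of_nonneg (Finset.subset_univ _) fun j _ _ => ?_
    have := hc j
    positivity
  refine le_trans ?_ h1
  have ha := hc a
  have hk := hc k
  unfold pairCost
  rw [div_mul_eq_mul_div, div_le_iff₀ (by positivity)]
  have h2 : (μ a - μ k) ^ 2 ≤ ((μ a - lam a) - (μ k - lam k)) ^ 2 := by
    apply pow_le_pow_left₀ <;> linarith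
  have h3 := mul_le_mul_of_nonneg_left h2 (mul_pos ha hk).le
  nlinarith [sq_nonneg (c a * (μ a - lam a) + c k * (μ k - lam k))]

/-- The infimum need not be attained, as the alternative set is open; it is approached by
the points with `lam k` at the weighted mean and `lam a` slightly below it. -/
lemma le_pairCost {K : ℕ} (c μ : Fin K → ℝ) (hc : ∀ k, 0 < c k) (a k : Fin K)
    (hka : k ≠ a) (s : ℝ)
    (hs : ∀ lam : Fin K → ℝ, lam a < lam k → s ≤ ∑ j, c j * ((μ j - lam j) ^ 2 / 2)) :
    s ≤ pairCost c μ a k := by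
  have ha := hc a
  have hk := hc k
  set p := (c a * μ a + c k * μ k) / (c a + c k) with hp
  have key : ∀ t > 0, s ≤ c a * ((μ a - (p - t)) ^ 2 / 2) + c k * ((μ k - p) ^ 2 / 2) := by
    intro t ht
    have h := hs (fun j => if j = a then p - t else if j = k then p else μ j)
      (by simp [hka, ht])
    refine h.trans_eq ?_
    rw [← Finset.sum_subset (Finset.subset_univ {a, k}), Finset.sum_pair hka.symm]
    · simp [hka]
    · intro j _ hj
      simp only [Finset.mem_insert, Finset.mem_singleton, not_or] at hj
      simp [hj.1, hj.2]
  have hlim : Tendsto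
      (fun t : ℝ => c a * ((μ a - (p - t)) ^ 2 / 2) + c k * ((μ k - p) ^ 2 / 2))
      (𝓝[>] 0) (𝓝 (c a * ((μ a - (p - 0)) ^ 2 / 2) + c k * ((μ k - p) ^ 2 / 2))) :=
    (Continuous.tendsto (by fun_prop) 0).mono_left nhdsWithin_le_nhds
  have hle := ge_of_tendsto hlim (eventually_nhdsWithin_of_forall key)
  refine hle.trans_eq ?_
  have hne : c a + c k ≠ 0 := by positivity
  rw [hp, pairCost]
  field_simp
  ring

lemma psi_eq {M K : ℕ} (q : Fin M → Fin K → ℝ) (μ : Fin K → ℝ) (w : Fin M → ℝ)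
    (a : Fin K) (hμ : ∀ k, k ≠ a → μ k < μ a) (hc : ∀ k, 0 < armWeight q w k)
    (hne : (Finset.univ.erase a).Nonempty) :
    psi q μ w = (Finset.univ.erase a).inf' hne (pairCost (armWeight q w) μ a) := by
  have h : ∃ a : Fin K, ∀ k, k ≠ a → μ k < μ a := ⟨a, hμ⟩
  have hch : h.choose = a := by
    by_contra hcon
    exact lt_asymm (hμ _ hcon) (h.choose_spec a (Ne.symm hcon))
  unfold psi
  rw [dif_pos h, hch]
  simp only [objective_eq]
  apply le_antisymm
  · refine Finset.le_inf' _ _ fun k hk => ?_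
    have hka := Finset.ne_of_mem_erase hk
    refine le_pairCost _ _ hc a k hka _ fun lam hlam => ?_
    refine csInf_le ⟨0, ?_⟩ ⟨lam, ⟨k, hka, hlam⟩, rfl⟩
    rintro v ⟨l, -, rfl⟩
    refine Finset.sum_nonneg fun j _ => ?_
    have := hc j
    positivity
  · obtain ⟨k, hk⟩ := hne
    have hka := Finset.ne_of_mem_erase hk
    refine le_csInf
      ⟨_, fun j => if j = k then 1 else 0, ⟨k, hka, by simp [hka.symm]⟩, rfl⟩ ?_
    rintro v ⟨l, ⟨j, hja, hl⟩, rfl⟩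
    exact (Finset.inf'_le _ (by simp [hja])).trans
      (pairCost_le _ μ l hc a j hja (hμ j hja) hl)

/-- `ψ` is jointly (sequentially) continuous at `(q₀, μ₀, w₀)` when `q₀` is a
box-probability matrix with strictly positive entries, `μ₀` has a unique maximiser, and
`w₀ ∈ Σ_M`: along any sequence of box-probability matrices `qⁿ`, mean vectors `μⁿ`, and
allocations `wⁿ ∈ Σ_M` converging to `(q₀, μ₀, w₀)`, `ψ(qⁿ, μⁿ, wⁿ) → ψ(q₀, μ₀, w₀)`. -/
theorem stmt5 (M K : ℕ) (hM : 1 ≤ M) (hK : 2 ≤ K)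
    (q₀ : Fin M → Fin K → ℝ) (hq₀pos : ∀ m k, 0 < q₀ m k) (hq₀sum : ∀ m, ∑ k, q₀ m k = 1)
    (μ₀ : Fin K → ℝ) (astar : Fin K) (hstar : ∀ k, k ≠ astar → μ₀ k < μ₀ astar)
    (w₀ : Fin M → ℝ) (hw₀ : w₀ ∈ simplex M)
    (qn : ℕ → Fin M → Fin K → ℝ)
    (hqn0 : ∀ n m k, 0 ≤ qn n m k) (hqnsum : ∀ n m, ∑ k, qn n m k = 1)
    (μn : ℕ → Fin K → ℝ) (wn : ℕ → Fin M → ℝ) (hwn : ∀ n, wn n ∈ simplex M)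
    (hq_tendsto : Filter.Tendsto qn Filter.atTop (nhds q₀))
    (hμ_tendsto : Filter.Tendsto μn Filter.atTop (nhds μ₀))
    (hw_tendsto : Filter.Tendsto wn Filter.atTop (nhds w₀)) :
    Filter.Tendsto (fun n => psi (qn n) (μn n) (wn n)) Filter.atTop
      (nhds (psi q₀ μ₀ w₀)) := by
  have hq : ∀ m k, Tendsto (fun n => qn n m k) atTop (𝓝 (q₀ m k)) := fun m k =>
    tendsto_pi_nhds.1 (tendsto_pi_nhds.1 hq_tendsto m) k
  have hμ := tendsto_pi_nhds.1 hμ_tendsto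
  have hw := tendsto_pi_nhds.1 hw_tendsto
  have hc : ∀ k, Tendsto (fun n => armWeight (qn n) (wn n) k) atTop (𝓝 (armWeight q₀ w₀ k)) :=
    fun k => tendsto_finsetSum _ fun m _ => (hw m).mul (hq m k)
  -- Some `w₀ m` is positive because the weights sum to one.
  have hc₀ : ∀ k, 0 < armWeight q₀ w₀ k := by
    intro k
    obtain ⟨m, -, hm⟩ : ∃ m ∈ Finset.univ, 0 < w₀ m :=
      Finset.exists_lt_of_sum_lt (f := fun _ => (0 : ℝ)) (by simp [hw₀.2])
    exact Finset.sum_pos' (fun i _ => mul_nonneg (hw₀.1 i) (hq₀pos i k).le)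
      ⟨m, Finset.mem_univ m, mul_pos hm (hq₀pos m k)⟩
  have hne : (Finset.univ.erase astar).Nonempty := by
    rw [← Finset.card_pos, Finset.card_erase_of_mem (Finset.mem_univ _), Finset.card_univ,
      Fintype.card_fin]
    omega
  have hev : ∀ᶠ n in atTop, psi (qn n) (μn n) (wn n) = (Finset.univ.erase astar).inf' hne
      (pairCost (armWeight (qn n) (wn n)) (μn n) astar) := by
    have h1 : ∀ᶠ n in atTop, ∀ k, k ≠ astar → μn n k < μn n astar :=
      eventually_all.2 fun k => by
        by_cases hk : k = astar
        · simp [hk]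
        · filter_upwards [(hμ k).eventually_lt (hμ astar) (hstar k hk)] with n hn _ using hn
    have h2 : ∀ᶠ n in atTop, ∀ k, 0 < armWeight (qn n) (wn n) k :=
      eventually_all.2 fun k => (hc k).eventually_const_lt (hc₀ k)
    filter_upwards [h1, h2] with n hn1 hn2 using psi_eq _ _ _ _ hn1 hn2 hne
  rw [psi_eq q₀ μ₀ w₀ astar hstar hc₀ hne]
  refine Tendsto.congr' (hev.mono fun n hn => hn.symm) ?_
  refine Tendsto.finset_inf'_nhds_apply hne fun k _ => ?_
  exact (((hc astar).mul (hc k)).div ((hc astar).add (hc k))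
    (add_pos (hc₀ _) (hc₀ _)).ne').mul ((((hμ astar).sub (hμ k)).pow 2).div_const 2)
end
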